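/- Let F be an infinite field, let σ be a ring automorphism of F, and let H be a subgroup of finite index in the multiplicative group F^×. If σ fixes every element of H, then σ is the identity automorphism of F. -/

import Mathlib

/-!
If a proper subfield `K` had multiplicative group of finite index in an infinite division ring,
then `K` would be infinite, and for `x ∉ K` two of the infinitely many translates `x + c`,
`c ∈ K`, would lie in the same coset of `Kˣ`. This is a nontrivial linear equation for `x` with
coefficients in `K`, so `x ∈ K` after all. Apply this to the fixed field of `σ`.
-/

theorem finite_of_finite_units {G₀ : Type*} [GroupWithZero G₀] [Finite G₀ˣ] : Finite G₀ := by
  classical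
  exact Finite.of_equiv (Option G₀ˣ) (WithZero.withZeroUnitsEquiv (G := G₀)).toEquiv

theorem infinite_submonoid_of_finiteIndex_units {G₀ : Type*} [GroupWithZero G₀] [Infinite G₀]
    (S : Submonoid G₀) [hS : S.units.FiniteIndex] : Infinite S := by
  by_contra hfin
  have : Finite S := not_infinite_iff_finite.mp hfin
  have : Finite S.units := Finite.of_equiv Sˣ S.unitsEquivUnitsType.symm.toEquiv
  have : Finite G₀ˣ := (Subgroup.finite_iff_finite_and_finiteIndex S.units).mpr ⟨this, hS⟩
  have : Finite G₀ := finite_of_finite_units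
  exact not_finite G₀

section

variable {D : Type*} [DivisionRing D] (K : Subfield D)

theorem mem_subfield_of_add_eq_add_mul {x c d h : D} (hc : c ∈ K) (hd : d ∈ K) (hh : h ∈ K)
    (hcd : c ≠ d) (hx : x + d = (x + c) * h) : x ∈ K := by
  have h_sub_one : h - 1 ≠ 0 := by
    rw [sub_ne_zero]
    rintro rfl
    exact hcd (add_left_cancel (hx.trans (mul_one _))).symm
  have hlin : x * (h - 1) = d - c * h := by
    rw [mul_sub_one, sub_eq_sub_iff_add_eq_add, ← add_mul, ← hx, add_comm]
  rw [eq_div_of_mul_eq h_sub_one hlin]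
  exact K.div_mem (K.sub_mem hd (K.mul_mem hc hh)) (K.sub_mem hh K.one_mem)

theorem subfield_eq_top_of_finiteIndex_units [Infinite D] [K.toSubmonoid.units.FiniteIndex] :
    K = ⊤ := by
  have : Infinite K := infinite_submonoid_of_finiteIndex_units K.toSubmonoid
  refine eq_top_iff.mpr fun x _ ↦ by_contra fun hx ↦ ?_
  have translate_ne_zero (c : K) : x + c ≠ 0 := fun h0 ↦
    hx (eq_neg_of_add_eq_zero_left h0 ▸ K.neg_mem c.2)
  let translate (c : K) : Dˣ := Units.mk0 (x + c) (translate_ne_zero c)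
  obtain ⟨c, d, hcd, hcoset⟩ := Finite.exists_ne_map_eq_of_infinite fun c ↦
    (translate c : Dˣ ⧸ K.toSubmonoid.units)
  have hratio : ((translate c)⁻¹ * translate d : Dˣ) ∈ K.toSubmonoid.units :=
    QuotientGroup.eq.mp hcoset
  refine hx (mem_subfield_of_add_eq_add_mul K c.2 d.2 hratio.1 (Subtype.coe_injective.ne hcd) ?_)
  exact congrArg Units.val (mul_inv_cancel_left (translate c) (translate d)).symm

end

theorem ringAut_eq_refl_of_fixes_finiteIndex_subgroup_general {D R : Type*} [DivisionRing D]
    [Infinite D] [Semiring R] (f g : D →+* R) (H : Subgroup Dˣ) [H.FiniteIndex]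
    (hfg : ∀ u ∈ H, f u = g u) : f = g := by
  cases subsingleton_or_nontrivial R
  · exact RingHom.ext fun _ ↦ Subsingleton.elim _ _
  have hH : H ≤ (f.eqLocusField g).toSubmonoid.units := fun u hu ↦
    ⟨hfg u hu, hfg u⁻¹ (H.inv_mem hu)⟩
  have := Subgroup.finiteIndex_of_le hH
  have htop := subfield_eq_top_of_finiteIndex_units (f.eqLocusField g)
  exact RingHom.ext fun x ↦ RingHom.mem_eqLocusField.mp (htop ▸ Subfield.mem_top x)

/-- If `F` is an infinite field, `σ` a ring automorphism of `F`, and `H` a finite-index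
subgroup of the multiplicative group `Fˣ` fixed pointwise by `σ`, then `σ` is the
identity automorphism. -/
theorem ringAut_eq_refl_of_fixes_finiteIndex_subgroup {F : Type*} [Field F] [Infinite F]
    (σ : F ≃+* F) (H : Subgroup Fˣ) (hH : H.FiniteIndex)
    (hfix : ∀ u : Fˣ, u ∈ H → σ u = u) : σ = RingEquiv.refl F :=
  RingEquiv.toRingHom_injective <|
    ringAut_eq_refl_of_fixes_finiteIndex_subgroup_general (σ : F →+* F) (RingHom.id F) H hfix
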